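/- Let γ ∈ (0,1], δ > 0, M > 0. Let ρ_α → ∞ and let v_α : [−ρ_α,ρ_α]×I → ℂⁿ be C¹ maps, and let v₊ : (−∞,0]×I → ℂⁿ be such that the map v₊^disk defined by v₊(s,t) = v₊^disk(e^{2π(s+it)}) extends to a C^{1,γ} map of the closed unit disk, with Taylor expansion v₊^disk(z) = v₊^disk(0) + f_z·z + f_{z̄}·conj(z) + O(|z|^{1+γ}) at 0. Write h_{α,1}(s) := ∫₀¹ v_α(s,t)e^{−2πit} dt, h_{+,1}(s) := ∫₀¹ v₊(s,t)e^{−2πit} dt, and b_{α,1}(s) := (1/2)(h_{α,1}′(s) − 2π h_{α,1}(s)). Assume: (i) for every s₀ > 0, sup_{s∈[−s₀,0]} |h_{α,1}(s+ρ_α) − h_{+,1}(s)| → 0 as α → ∞; (ii) sup_α ∫₁^{ρ_α} |b_{α,1}(σ)|² e^{2(2π+δ)(ρ_α−σ)} dσ ≤ M. Then lim_{α→∞} e^{2π(ρ_α−1)} h_{α,1}(1) = f_z. (Paper's Proposition 4.4, plus side, for the standard complex structure: the rescaled first Fourier coefficient at the middle of the neck converges to the complex-linear derivative of the limit disk at the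 node.) -/

import Mathlib

open MeasureTheory Real Set Filter

noncomputable section

abbrev Cn (n : ℕ) := EuclideanSpace ℂ (Fin n)

/-- Partial derivative in the `s`-direction. -/
def pdS {E : Type*} [NormedAddCommGroup E] [NormedSpace ℝ E] (f : ℝ × ℝ → E) (p : ℝ × ℝ) : E :=
  fderiv ℝ f p (1, 0)

/-- Partial derivative in the `t`-direction. -/
def pdT {E : Type*} [NormedAddCommGroup E] [NormedSpace ℝ E] (f : ℝ × ℝ → E) (p : ℝ × ℝ) : E :=
  fderiv ℝ f p (0, 1)

/-- The standard ∂̄-operator: ∂̄f = (1/2)(∂_s f + i ∂_t f). -/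
def dbar {E : Type*} [NormedAddCommGroup E] [NormedSpace ℂ E] (f : ℝ × ℝ → E) (p : ℝ × ℝ) : E :=
  (2⁻¹ : ℝ) • (pdS f p + Complex.I • pdT f p)

/-- `cexp s t = e^{2π(s+it)}`. -/
def cexp (s t : ℝ) : ℂ :=
  Complex.exp (((2 * π * s : ℝ) : ℂ) + ((2 * π * t : ℝ) : ℂ) * Complex.I)

/-- The `m`-th Fourier coefficient of `f` at `s`. -/
def fCoef {n : ℕ} (f : ℝ × ℝ → Cn n) (m : ℤ) (s : ℝ) : Cn n :=
  ∫ t in (0:ℝ)..1, Complex.exp (-(((2 * π * (m:ℝ) * t : ℝ) : ℂ) * Complex.I)) • f (s, t)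

/-- Unweighted Sobolev `k`-norm of `f` over `U`. -/
def sobNorm {E : Type*} [NormedAddCommGroup E] [NormedSpace ℝ E] (k : ℕ)
    (f : ℝ × ℝ → E) (U : Set (ℝ × ℝ)) : ℝ :=
  Real.sqrt (∫ p in U, ∑ j ∈ Finset.range (k + 1), ‖iteratedFDeriv ℝ j f p‖ ^ 2)

/-- Weighted Sobolev `(k,δ)`-norm of `f` over `U` with weight `e^{2δ|s|}`. -/
def sobNormW {E : Type*} [NormedAddCommGroup E] [NormedSpace ℝ E] (k : ℕ) (δ : ℝ)
    (f : ℝ × ℝ → E) (U : Set (ℝ × ℝ)) : ℝ :=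
  Real.sqrt (∫ p in U,
    (∑ j ∈ Finset.range (k + 1), ‖iteratedFDeriv ℝ j f p‖ ^ 2) * Real.exp (2 * δ * |p.1|))

/-- Hat-norm: weighted Sobolev `(k,δ)`-norm with weight `e^{2δ(r−|s|)}` (big in the middle). -/
def hatNorm {E : Type*} [NormedAddCommGroup E] [NormedSpace ℝ E] (k : ℕ) (δ r : ℝ)
    (f : ℝ × ℝ → E) (U : Set (ℝ × ℝ)) : ℝ :=
  Real.sqrt (∫ p in U,
    (∑ j ∈ Finset.range (k + 1), ‖iteratedFDeriv ℝ j f p‖ ^ 2) * Real.exp (2 * δ * (r - |p.1|)))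

/-!
For `h` of class `C¹` the function `e^{κ(R-σ)} h(σ)` has derivative `e^{κ(R-σ)} (h' - κ h)(σ)`, so
a bound on `h' - κ h` in `L²` with weight `e^{2(κ+δ)(R-σ)}` and Cauchy–Schwarz control its variation
on `[c, x]` by `O(e^{-δ(R-x)})`, uniformly in the length of the neck. Taking `κ = 2π` and `h` the
first Fourier mode, `e^{2π(ρ-1)} h(1)` is thus `O(e^{-δs})`-close to `e^{2πs} h(ρ-s)`, which
converges to `e^{2πs} h₊(-s)` as `ρ → ∞`. Finally, the first Fourier mode only sees the
complex-linear part of the Taylor expansion on the circle `|z| = e^{-2πs}`, so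
`e^{2πs} h₊(-s) → f_z` as `s → ∞`.
-/

open scoped Topology

/-! ### Limits and integrals -/

theorem tendsto_of_eventually_dist_le {ι σ X : Type*} [PseudoMetricSpace X]
    {l : Filter ι} {p : Filter σ} [p.NeBot] {F : σ → ι → X} {f : ι → X} {L : σ → X} {a : X}
    {b : σ → ℝ} (hdist : ∀ᶠ s in p, ∀ᶠ i in l, dist (f i) (F s i) ≤ b s)
    (hb : Tendsto b p (𝓝 0)) (hF : ∀ᶠ s in p, Tendsto (F s) l (𝓝 (L s)))
    (hL : Tendsto L p (𝓝 a)) : Tendsto f l (𝓝 a) := by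
  refine Metric.tendsto_nhds.2 fun ε hε => ?_
  have hε₃ : 0 < ε / 3 := by positivity
  obtain ⟨s, hfF, hbs, hFs, hLs⟩ := (hdist.and <| (hb.eventually_lt_const hε₃).and <|
    hF.and <| Metric.tendsto_nhds.1 hL (ε / 3) hε₃).exists
  filter_upwards [hfF, Metric.tendsto_nhds.1 hFs (ε / 3) hε₃] with i hi hFi
  calc dist (f i) a ≤ dist (f i) (F s i) + dist (F s i) (L s) + dist (L s) a := dist_triangle4 ..
    _ < ε := by linarith

theorem tendsto_of_eventually_norm_sub_le_on_Icc {ι E : Type*} [SeminormedAddCommGroup E]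
    {l : Filter ι} {h : ι → ℝ → E} {g : ℝ → E}
    (hhg : ∀ s₀ : ℝ, 0 < s₀ → ∀ η : ℝ, 0 < η →
      ∀ᶠ i in l, ∀ s ∈ Icc (-s₀) (0 : ℝ), ‖h i s - g s‖ ≤ η)
    {s : ℝ} (hs : s ≤ 0) : Tendsto (fun i => h i s) l (𝓝 (g s)) := by
  refine Metric.nhds_basis_closedBall.tendsto_right_iff.2 fun η hη => ?_
  filter_upwards [hhg (1 - s) (by linarith) η hη] with i hi
  exact mem_closedBall_iff_norm.2 (hi s ⟨by linarith, hs⟩)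

theorem isLittleO_id_of_norm_le_rpow {E F : Type*} [NormedAddCommGroup E] [NormedAddCommGroup F]
    {r : E → F} {γ C : ℝ} (hγ : 0 < γ) (hr : ∀ z, ‖z‖ ≤ 1 → ‖r z‖ ≤ C * ‖z‖ ^ (1 + γ)) :
    r =o[𝓝 0] fun z => z := by
  have hrpow : Tendsto (fun z : E => C * ‖z‖ ^ γ) (𝓝 0) (𝓝 0) := by
    have := ((continuous_norm (E := E)).rpow_const fun _ => Or.inr hγ.le).tendsto 0
    simpa [Real.zero_rpow hγ.ne'] using this.const_mul C
  refine Asymptotics.IsLittleO.of_bound fun ε hε => ?_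
  filter_upwards [Metric.closedBall_mem_nhds (0 : E) one_pos, hrpow.eventually_lt_const hε]
    with z hz hzε
  calc ‖r z‖ ≤ C * ‖z‖ ^ (1 + γ) := hr z (by simpa using hz)
    _ = C * ‖z‖ ^ γ * ‖z‖ := by
      rw [Real.rpow_add_of_nonneg (norm_nonneg z) zero_le_one hγ.le, Real.rpow_one]; ring
    _ ≤ ε * ‖z‖ := by gcongr

theorem integral_mul_le_sqrt_mul_sqrt {f g : ℝ → ℝ} (hf : Continuous f) (hg : Continuous g)
    {a b : ℝ} (hab : a ≤ b) :
    ∫ x in a..b, f x * g x ≤ √(∫ x in a..b, f x ^ 2) * √(∫ x in a..b, g x ^ 2) := by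
  have memLp_two {u : ℝ → ℝ} (hu : Continuous u) :
      MemLp u (ENNReal.ofReal 2) (volume.restrict (Ioc a b)) := by
    rw [ENNReal.ofReal_ofNat, memLp_two_iff_integrable_sq hu.aestronglyMeasurable]
    exact (hu.pow 2).integrableOn_Ioc
  simp only [intervalIntegral.integral_of_le hab]
  calc ∫ x in Ioc a b, f x * g x ≤ ∫ x in Ioc a b, ‖f x‖ * ‖g x‖ := by
        refine integral_mono (hf.mul hg).integrableOn_Ioc (hf.norm.mul hg.norm).integrableOn_Ioc
          fun x => ?_
        exact (le_abs_self _).trans (abs_mul _ _).le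
    _ ≤ _ := by
      have holder := integral_mul_norm_le_Lp_mul_Lq Real.HolderConjugate.two_two
        (memLp_two hf) (memLp_two hg)
      simpa [Real.sqrt_eq_rpow] using holder

theorem contDiff_one_parametric_intervalIntegral {E : Type*} [NormedAddCommGroup E]
    [NormedSpace ℝ E] {F : ℝ × ℝ → E} (hF : ContDiff ℝ 1 F) (a b : ℝ) :
    ContDiff ℝ 1 fun s => ∫ t in a..b, F (s, t) := by
  have hF' : Continuous fun p : ℝ × ℝ => fderiv ℝ F p (1, 0) :=
    (hF.continuous_fderiv one_ne_zero).clm_apply continuous_const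
  have hasDerivAt_slice (s t : ℝ) : HasDerivAt (fun s => F (s, t)) (fderiv ℝ F (s, t) (1, 0)) s :=
    (hF.differentiable one_ne_zero (s, t)).hasFDerivAt.comp_hasDerivAt s
      ((hasDerivAt_id s).prodMk (hasDerivAt_const s t))
  have hasDerivAt_integral (s : ℝ) : HasDerivAt (fun s => ∫ t in a..b, F (s, t))
      (∫ t in a..b, fderiv ℝ F (s, t) (1, 0)) s := by
    obtain ⟨C, hC⟩ := ((isCompact_Icc (a := s - 1) (b := s + 1)).prod
      (isCompact_uIcc (a := a) (b := b))).exists_bound_of_continuousOn hF'.continuousOn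
    refine (intervalIntegral.hasDerivAt_integral_of_dominated_loc_of_deriv_le
      (F := fun s t => F (s, t)) (bound := fun _ => C)
      (Icc_mem_nhds (sub_one_lt s) (lt_add_one s))
      (.of_forall fun x => ?_) ?_ ?_ (.of_forall fun t ht x hx => ?_)
      intervalIntegrable_const (.of_forall fun t _ x _ => hasDerivAt_slice x t)).2
    · exact (hF.continuous.comp (.prodMk_right x)).aestronglyMeasurable
    · exact (hF.continuous.comp (.prodMk_right s)).intervalIntegrable _ _
    · exact (hF'.comp (.prodMk_right s)).aestronglyMeasurable
    · exact hC (x, t) ⟨hx, uIoc_subset_uIcc ht⟩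
  refine contDiff_one_iff_deriv.2 ⟨fun s => (hasDerivAt_integral s).differentiableAt, ?_⟩
  rw [funext fun s => (hasDerivAt_integral s).deriv]
  exact intervalIntegral.continuous_parametric_intervalIntegral_of_continuous' hF' a b

/-! ### Neck estimate -/

section Neck

variable {E : Type*} [NormedAddCommGroup E] [NormedSpace ℝ E] [CompleteSpace E]

theorem integral_exp_smul_deriv_sub_smul {h : ℝ → E} (hh : ContDiff ℝ 1 h) (κ R a b : ℝ) :
    ∫ σ in a..b, rexp (κ * (R - σ)) • (deriv h σ - κ • h σ) =
      rexp (κ * (R - b)) • h b - rexp (κ * (R - a)) • h a := by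
  have hhc : Continuous h := hh.continuous
  refine intervalIntegral.integral_eq_sub_of_hasDerivAt
    (f := fun σ => rexp (κ * (R - σ)) • h σ) (fun σ _ => ?_)
    (Continuous.intervalIntegrable (by fun_prop) _ _)
  have hexp : HasDerivAt (fun σ => rexp (κ * (R - σ))) (rexp (κ * (R - σ)) * (κ * (-1))) σ :=
    (((hasDerivAt_id σ).const_sub R).const_mul κ).exp
  refine (hexp.smul (hh.differentiable one_ne_zero σ).hasDerivAt).congr_deriv ?_
  module

theorem integral_exp_neg_mul_sub_le {κ : ℝ} (hκ : 0 < κ) (R a b : ℝ) :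
    ∫ σ in a..b, rexp (-κ * (R - σ)) ≤ rexp (-κ * (R - b)) / κ := by
  have hderiv (σ : ℝ) :
      HasDerivAt (fun σ => rexp (-κ * (R - σ)) / κ) (rexp (-κ * (R - σ))) σ := by
    refine ((((hasDerivAt_id σ).const_sub R).const_mul (-κ)).exp.div_const κ).congr_deriv ?_
    simp only [id]
    field_simp
  rw [intervalIntegral.integral_eq_sub_of_hasDerivAt (fun σ _ => hderiv σ)
    (Continuous.intervalIntegrable (by fun_prop) _ _)]
  exact sub_le_self _ (by positivity)

theorem norm_exp_smul_sub_exp_smul_le {h : ℝ → E} (hh : ContDiff ℝ 1 h) {κ δ M c x R : ℝ}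
    (hδ : 0 < δ) (hcx : c ≤ x) (hxR : x ≤ R)
    (hM : ∫ σ in c..R, ‖deriv h σ - κ • h σ‖ ^ 2 * rexp (2 * (κ + δ) * (R - σ)) ≤ M) :
    ‖rexp (κ * (R - x)) • h x - rexp (κ * (R - c)) • h c‖ ≤
      √M * √(rexp (-(2 * δ) * (R - x)) / (2 * δ)) := by
  have hhc : Continuous h := hh.continuous
  let w : ℝ → ℝ := fun σ => ‖deriv h σ - κ • h σ‖ * rexp ((κ + δ) * (R - σ))
  have w_sq (σ : ℝ) :
      w σ ^ 2 = ‖deriv h σ - κ • h σ‖ ^ 2 * rexp (2 * (κ + δ) * (R - σ)) := by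
    rw [mul_pow, ← Real.exp_nat_mul]
    push_cast
    ring_nf
  have exp_sq (σ : ℝ) : rexp (-δ * (R - σ)) ^ 2 = rexp (-(2 * δ) * (R - σ)) := by
    rw [← Real.exp_nat_mul]
    push_cast
    ring_nf
  have integral_w_sq_le : ∫ σ in c..x, w σ ^ 2 ≤ M := by
    simp only [w_sq]
    exact (intervalIntegral.integral_mono_interval le_rfl hcx hxR
      (.of_forall fun σ => by positivity)
      (Continuous.intervalIntegrable (by fun_prop) _ _)).trans hM
  have norm_eq (σ : ℝ) :
      ‖rexp (κ * (R - σ)) • (deriv h σ - κ • h σ)‖ = w σ * rexp (-δ * (R - σ)) := by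
    rw [norm_smul, Real.norm_of_nonneg (Real.exp_pos _).le, mul_assoc, ← Real.exp_add, mul_comm]
    ring_nf
  rw [← integral_exp_smul_deriv_sub_smul hh]
  calc ‖∫ σ in c..x, rexp (κ * (R - σ)) • (deriv h σ - κ • h σ)‖
      ≤ ∫ σ in c..x, w σ * rexp (-δ * (R - σ)) := by
        simpa only [norm_eq] using intervalIntegral.norm_integral_le_integral_norm
          (f := fun σ => rexp (κ * (R - σ)) • (deriv h σ - κ • h σ)) hcx
    _ ≤ √(∫ σ in c..x, w σ ^ 2) * √(∫ σ in c..x, rexp (-δ * (R - σ)) ^ 2) :=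
        integral_mul_le_sqrt_mul_sqrt (by fun_prop) (by fun_prop) hcx
    _ ≤ √M * √(rexp (-(2 * δ) * (R - x)) / (2 * δ)) := by
        simp only [exp_sq]
        gcongr
        exact integral_exp_neg_mul_sub_le (by positivity) R c x

theorem tendsto_exp_smul_of_integral_deriv_sub_smul_le {ι : Type*} {l : Filter ι}
    {ρ : ι → ℝ} (hρ : Tendsto ρ l atTop) {h : ι → ℝ → E} (hh : ∀ i, ContDiff ℝ 1 (h i))
    {g : ℝ → E} {a : E} {κ δ M c : ℝ} (hδ : 0 < δ)
    (hconv : ∀ s ≤ 0, Tendsto (fun i => h i (s + ρ i)) l (𝓝 (g s)))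
    (hg : Tendsto (fun s => rexp (-κ * s) • g s) atBot (𝓝 a))
    (hM : ∀ i, ∫ σ in c..ρ i,
      ‖deriv (h i) σ - κ • h i σ‖ ^ 2 * rexp (2 * (κ + δ) * (ρ i - σ)) ≤ M) :
    Tendsto (fun i => rexp (κ * (ρ i - c)) • h i c) l (𝓝 a) := by
  refine tendsto_of_eventually_dist_le (p := atBot)
    (F := fun s i => rexp (-κ * s) • h i (s + ρ i))
    (b := fun s => √M * √(rexp (2 * δ * s) / (2 * δ))) ?_ ?_ ?_ hg
  · filter_upwards [eventually_le_atBot 0] with s hs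
    filter_upwards [hρ.eventually_ge_atTop (c - s)] with i hi
    rw [dist_comm, dist_eq_norm]
    have neck := norm_exp_smul_sub_exp_smul_le (hh i) (x := s + ρ i) hδ (by linarith)
      (by linarith) (hM i)
    rw [sub_add_cancel_right] at neck
    simpa only [neg_mul, mul_neg, neg_neg] using neck
  · have hexp : Tendsto (fun s => rexp (2 * δ * s)) atBot (𝓝 0) :=
      Real.tendsto_exp_atBot.comp (tendsto_id.const_mul_atBot (by positivity))
    simpa using ((hexp.div_const (2 * δ)).sqrt).const_mul √M
  · filter_upwards [eventually_le_atBot 0] with s hs using (hconv s hs).const_smul _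

end Neck

/-! ### Fourier coefficients on the cylinder -/

section FourierCoefficients

variable {n : ℕ}

theorem contDiff_fourierKernel (m : ℤ) {N : WithTop ℕ∞} : ContDiff ℝ N fun t : ℝ =>
    Complex.exp (-(((2 * π * (m : ℝ) * t : ℝ) : ℂ) * Complex.I)) :=
  (((Complex.ofRealCLM.contDiff.comp (contDiff_const.mul contDiff_id)).mul
    contDiff_const).neg).cexp

theorem contDiff_one_fCoef {f : ℝ × ℝ → Cn n} (hf : ContDiff ℝ 1 f) (m : ℤ) :
    ContDiff ℝ 1 (fCoef f m) :=
  contDiff_one_parametric_intervalIntegral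
    (((contDiff_fourierKernel m).comp contDiff_snd).smul hf) 0 1

theorem fCoef_sub {f g : ℝ × ℝ → Cn n} {s : ℝ} (hf : Continuous fun t => f (s, t))
    (hg : Continuous fun t => g (s, t)) (m : ℤ) :
    fCoef (fun p => f p - g p) m s = fCoef f m s - fCoef g m s := by
  have hkernel := (contDiff_fourierKernel m (N := 0)).continuous
  simp only [fCoef, smul_sub]
  exact intervalIntegral.integral_sub ((hkernel.smul hf).intervalIntegrable _ _)
    ((hkernel.smul hg).intervalIntegrable _ _)

theorem norm_fCoef_le {f : ℝ × ℝ → Cn n} {s C : ℝ} (hC : ∀ t, ‖f (s, t)‖ ≤ C) (m : ℤ) :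
    ‖fCoef f m s‖ ≤ C := by
  have norm_exp (t : ℝ) :
      ‖Complex.exp (-(((2 * π * (m : ℝ) * t : ℝ) : ℂ) * Complex.I))‖ = 1 := by
    rw [← neg_mul, ← Complex.ofReal_neg, Complex.norm_exp_ofReal_mul_I]
  simpa only [fCoef, sub_zero, abs_one, mul_one] using
    intervalIntegral.norm_integral_le_of_norm_le_const (a := 0) (b := 1) fun t _ =>
      (norm_smul_le _ (f (s, t))).trans (by rw [norm_exp, one_mul]; exact hC t)

theorem integral_exp_two_pi_int_mul_I (k : ℤ) :
    ∫ t in (0 : ℝ)..1, Complex.exp (2 * π * k * Complex.I * t) = if k = 0 then 1 else 0 := by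
  split_ifs with hk
  · simp [hk]
  · have hne : 2 * π * k * Complex.I ≠ 0 := by simp [hk, Real.pi_ne_zero]
    have hexp : Complex.exp (2 * π * k * Complex.I) = 1 :=
      Complex.exp_eq_one_iff.2 ⟨k, by ring⟩
    simp [integral_exp_mul_complex hne, hexp]

theorem fCoef_exp_smul (k m : ℤ) (g : ℝ → Cn n) (s : ℝ) :
    fCoef (fun p => Complex.exp (2 * π * k * Complex.I * p.2) • g p.1) m s =
      if k = m then g s else 0 := by
  have integrand_eq (t : ℝ) :
      Complex.exp (-(((2 * π * (m : ℝ) * t : ℝ) : ℂ) * Complex.I)) •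
        Complex.exp (2 * π * k * Complex.I * t) • g s =
      Complex.exp (2 * π * (k - m : ℤ) * Complex.I * t) • g s := by
    rw [smul_smul, ← Complex.exp_add]
    push_cast
    ring_nf
  simp only [fCoef, integrand_eq, intervalIntegral.integral_smul_const,
    integral_exp_two_pi_int_mul_I, sub_eq_zero, ite_smul, one_smul, zero_smul]

theorem norm_cexp (s t : ℝ) : ‖cexp s t‖ = rexp (2 * π * s) := by
  simp [cexp, Complex.norm_exp]

@[fun_prop]
theorem continuous_cexp (s : ℝ) : Continuous (cexp s) := by
  unfold cexp
  fun_prop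

theorem cexp_eq_exp_mul (s t : ℝ) :
    cexp s t = Complex.exp (2 * π * (1 : ℤ) * Complex.I * t) * rexp (2 * π * s) := by
  rw [cexp, Complex.ofReal_exp, ← Complex.exp_add]
  push_cast
  ring_nf

theorem conj_cexp_eq_exp_mul (s t : ℝ) :
    starRingEnd ℂ (cexp s t) =
      Complex.exp (2 * π * (-1 : ℤ) * Complex.I * t) * rexp (2 * π * s) := by
  rw [cexp, ← Complex.exp_conj, Complex.ofReal_exp, ← Complex.exp_add]
  simp only [map_add, map_mul, Complex.conj_ofReal, Complex.conj_I]
  push_cast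
  ring_nf

theorem fCoef_cexp_smul (a : Cn n) (m : ℤ) (s : ℝ) :
    fCoef (fun p => cexp p.1 p.2 • a) m s = if 1 = m then rexp (2 * π * s) • a else 0 := by
  simpa only [cexp_eq_exp_mul, mul_smul, Complex.coe_smul] using
    fCoef_exp_smul 1 m (fun s => rexp (2 * π * s) • a) s

theorem fCoef_conj_cexp_smul (a : Cn n) (m : ℤ) (s : ℝ) :
    fCoef (fun p => starRingEnd ℂ (cexp p.1 p.2) • a) m s =
      if -1 = m then rexp (2 * π * s) • a else 0 := by
  simpa only [conj_cexp_eq_exp_mul, mul_smul, Complex.coe_smul] using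
    fCoef_exp_smul (-1) m (fun s => rexp (2 * π * s) • a) s

theorem fCoef_const (a : Cn n) (m : ℤ) (s : ℝ) :
    fCoef (fun _ => a) m s = if 0 = m then a else 0 := by
  simpa using fCoef_exp_smul 0 m (fun _ => a) s

theorem fCoef_one_sub_affine {v : ℝ × ℝ → Cn n} {s : ℝ} (hv : Continuous fun t => v (s, t))
    (c a b : Cn n) :
    fCoef (fun p => v p - c - cexp p.1 p.2 • a - starRingEnd ℂ (cexp p.1 p.2) • b) 1 s =
      fCoef v 1 s - rexp (2 * π * s) • a := by
  have hlin : Continuous fun t => cexp s t • a := by fun_prop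
  have hantilin : Continuous fun t => starRingEnd ℂ (cexp s t) • b :=
    (Complex.continuous_conj.comp (continuous_cexp s)).smul continuous_const
  rw [fCoef_sub ?_ hantilin, fCoef_sub ?_ hlin, fCoef_sub hv continuous_const,
    fCoef_const, fCoef_cexp_smul, fCoef_conj_cexp_smul]
  · simp
  · exact hv.sub continuous_const
  · exact (hv.sub continuous_const).sub hlin

theorem tendsto_exp_smul_fCoef_one_of_isLittleO {v : ℝ × ℝ → Cn n}
    (hv : ∀ s ≤ 0, Continuous fun t => v (s, t)) {u : ℂ → Cn n}
    (hvu : ∀ s t : ℝ, s ≤ 0 → v (s, t) = u (cexp s t)) {a b : Cn n}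
    (hu : (fun z => u z - u 0 - z • a - starRingEnd ℂ z • b) =o[𝓝 0] fun z => z) :
    Tendsto (fun s => rexp (-(2 * π) * s) • fCoef v 1 s) atBot (𝓝 a) := by
  have hexp : Tendsto (fun s => rexp (2 * π * s)) atBot (𝓝 0) :=
    Real.tendsto_exp_atBot.comp (tendsto_id.const_mul_atBot (by positivity))
  refine Metric.nhds_basis_closedBall.tendsto_right_iff.2 fun ε hε => ?_
  obtain ⟨r, hr, hball⟩ := Metric.eventually_nhds_iff.1 (hu.bound hε)
  filter_upwards [eventually_le_atBot 0, hexp.eventually_lt_const hr] with s hs hsr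
  have remainder_le : ‖fCoef v 1 s - rexp (2 * π * s) • a‖ ≤ ε * rexp (2 * π * s) := by
    rw [← fCoef_one_sub_affine (hv s hs) (u 0) a b]
    refine norm_fCoef_le (fun t => ?_) 1
    simp only [hvu s t hs, ← norm_cexp s t]
    exact hball (by rwa [dist_zero_right, norm_cexp])
  have exp_mul_exp : rexp (-(2 * π) * s) * rexp (2 * π * s) = 1 := by
    rw [← Real.exp_add, neg_mul, neg_add_cancel, Real.exp_zero]
  have rescale : rexp (-(2 * π) * s) • fCoef v 1 s - a =
      rexp (-(2 * π) * s) • (fCoef v 1 s - rexp (2 * π * s) • a) := by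
    rw [smul_sub, smul_smul, exp_mul_exp, one_smul]
  rw [Metric.mem_closedBall, dist_eq_norm, rescale, norm_smul,
    Real.norm_of_nonneg (Real.exp_pos _).le]
  calc rexp (-(2 * π) * s) * ‖fCoef v 1 s - rexp (2 * π * s) • a‖
      ≤ rexp (-(2 * π) * s) * (ε * rexp (2 * π * s)) := by gcongr
    _ = ε := by rw [mul_left_comm, exp_mul_exp, mul_one]

end FourierCoefficients

theorem stmt_6_general {ι : Type*} {l : Filter ι} {n : ℕ} {δ M c : ℝ} (hδ : 0 < δ)
    {ρ : ι → ℝ} (hρ : Tendsto ρ l atTop)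
    {v : ι → ℝ × ℝ → Cn n} (hv : ∀ i, ContDiff ℝ 1 (v i))
    {vp : ℝ × ℝ → Cn n} (hvp : ∀ s ≤ 0, Continuous fun t => vp (s, t))
    {vdisk : ℂ → Cn n} (hrel : ∀ s t : ℝ, s ≤ 0 → vp (s, t) = vdisk (cexp s t)) {fz fzb : Cn n}
    (hTaylor : (fun z => vdisk z - vdisk 0 - z • fz - starRingEnd ℂ z • fzb) =o[𝓝 0] fun z => z)
    (hconv : ∀ s ≤ 0, Tendsto (fun i => fCoef (v i) 1 (s + ρ i)) l (𝓝 (fCoef vp 1 s)))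
    (hdbar : ∀ i, ∫ σ in c..ρ i,
      ‖(2⁻¹ : ℝ) • (deriv (fCoef (v i) 1) σ - (2 * π) • fCoef (v i) 1 σ)‖ ^ 2 *
        rexp (2 * (2 * π + δ) * (ρ i - σ)) ≤ M) :
    Tendsto (fun i => rexp (2 * π * (ρ i - c)) • fCoef (v i) 1 c) l (𝓝 fz) := by
  refine tendsto_exp_smul_of_integral_deriv_sub_smul_le hρ (fun i => contDiff_one_fCoef (hv i) 1)
    hδ hconv (tendsto_exp_smul_fCoef_one_of_isLittleO hvp hrel hTaylor) (M := 4 * M) fun i => ?_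
  have norm_sq_eq (x : Cn n) : ‖x‖ ^ 2 = 4 * ‖(2⁻¹ : ℝ) • x‖ ^ 2 := by
    rw [norm_smul, Real.norm_of_nonneg (by norm_num)]
    ring
  simp only [norm_sq_eq (deriv _ _ - _), mul_assoc (4 : ℝ), intervalIntegral.integral_const_mul]
  exact mul_le_mul_of_nonneg_left (hdbar i) zero_le_four

theorem stmt_6 (n : ℕ) (hn : 1 ≤ n) (γ δ M : ℝ)
    (hγ0 : 0 < γ) (hγ1 : γ ≤ 1) (hδ : 0 < δ) (hM : 0 < M)
    (ρ : ℕ → ℝ) (hρ : Tendsto ρ atTop atTop)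
    (vα : ℕ → ℝ × ℝ → Cn n) (hvα : ∀ α, ContDiff ℝ 1 (vα α))
    (hperα : ∀ α, ∀ s t : ℝ, vα α (s, t + 1) = vα α (s, t))
    (vp : ℝ × ℝ → Cn n) (hvp : ContDiff ℝ 1 vp)
    (hperp : ∀ s t : ℝ, vp (s, t + 1) = vp (s, t))
    (vdisk : ℂ → Cn n)
    (hrel : ∀ s t : ℝ, s ≤ 0 → vp (s, t) = vdisk (cexp s t))
    (hC1 : ContDiff ℝ 1 vdisk)
    (hHolder : ∃ C : ℝ, ∀ z w : ℂ, ‖z‖ ≤ 1 → ‖w‖ ≤ 1 →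
      ‖fderiv ℝ vdisk z - fderiv ℝ vdisk w‖ ≤ C * ‖z - w‖ ^ γ)
    (fz fzb : Cn n)
    (hTaylor : ∃ M₂ : ℝ, ∀ z : ℂ, ‖z‖ ≤ 1 →
      ‖vdisk z - vdisk 0 - z • fz - (starRingEnd ℂ z) • fzb‖ ≤ M₂ * ‖z‖ ^ ((1:ℝ) + γ))
    -- (i): local uniform convergence of the first Fourier coefficients near the plus end
    (hi : ∀ s₀ : ℝ, 0 < s₀ → ∀ η : ℝ, 0 < η → ∀ᶠ α in atTop, ∀ s ∈ Icc (-s₀) (0:ℝ),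
      ‖fCoef (vα α) 1 (s + ρ α) - fCoef vp 1 s‖ ≤ η)
    -- (ii): weighted bound on the first Fourier mode of ∂̄v_α
    (hii : ∀ α, (∫ σ in (1:ℝ)..(ρ α),
      ‖(2⁻¹ : ℝ) • (deriv (fun r => fCoef (vα α) 1 r) σ - (2 * π) • fCoef (vα α) 1 σ)‖ ^ 2 *
        Real.exp (2 * (2 * π + δ) * (ρ α - σ))) ≤ M) :
    Tendsto (fun α => Real.exp (2 * π * (ρ α - 1)) • fCoef (vα α) 1 1) atTop (nhds fz) := by
  obtain ⟨M₂, hM₂⟩ := hTaylor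
  exact stmt_6_general hδ hρ hvα (fun s _ => hvp.continuous.comp (.prodMk_right s)) hrel
    (isLittleO_id_of_norm_le_rpow hγ0 hM₂)
    (fun _ => tendsto_of_eventually_norm_sub_le_on_Icc hi) hii
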